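/- In the setting and with the conclusion of the Shift Theorem (so K is Noetherian, n_0 ∈ ℕ and the nonzero element h ∈ A_{n_0}/I_{n_0} are chosen such that, with B'_n := (A_{n_0+n}/I_{n_0+n})[1/h], for every n ≥ 1 the natural B'_0-algebra map from the n-fold tensor power of B'_1 over B'_0 to B'_n is an isomorphism), there exists a nonzero element h' ∈ B'_0 such that, setting B''_n := B'_n[1/h'] (localization at the image of h'), the following hold: (1) for every n ≥ 1 the natural B''_0-algebra homomorphism from the n-fold tensor power of B''_1 over B''_0 to B''_n is an isomorphism; (2) B''_0 is an integral domain; and (3) for every n, every minimal prime ideal P of B''_n contracts to the zero ideal of B''_0 along the structure map B''_0 → B''_n. -/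

import Mathlib

open MvPolynomial
open scoped TensorProduct

namespace WideMatrixShift

variable (K : Type) [CommRing K] (c : ℕ)
variable (I : ∀ n : ℕ, Ideal (MvPolynomial (Fin c × Fin n) K))

/-- The quotient `A_n / I_n`. -/
def Qu (n : ℕ) : Type := MvPolynomial (Fin c × Fin n) K ⧸ I n

noncomputable instance (n : ℕ) : CommRing (Qu K c I n) :=
  inferInstanceAs (CommRing (MvPolynomial (Fin c × Fin n) K ⧸ I n))

/-- The property that every injection `[m] → [n]` maps `I m` into `I n`. -/
def ChainMap : Prop := ∀ (m n : ℕ) (π : Fin m → Fin n), Function.Injective π →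
  Ideal.map ((rename (Prod.map (id : Fin c → Fin c) π)).toRingHom) (I m) ≤ I n

/-- The homomorphism `A_m/I_m → A_n/I_n` induced by an injection `π : [m] → [n]`. -/
noncomputable def ind (hmap : ChainMap K c I) (m n : ℕ) (π : Fin m → Fin n)
    (hπ : Function.Injective π) : Qu K c I m →+* Qu K c I n :=
  Ideal.quotientMap (I n) ((rename (Prod.map (id : Fin c → Fin c) π)).toRingHom)
    (Ideal.map_le_iff_le_comap.mp (hmap m n π hπ))

theorem castAdd_inj (m n : ℕ) : Function.Injective (Fin.castAdd n : Fin m → Fin (m + n)) := by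
  intro x y hxy
  apply Fin.ext
  simpa using congrArg Fin.val hxy

theorem ind_ind (hmap : ChainMap K c I) (l m n : ℕ) (π : Fin m → Fin n)
    (π' : Fin l → Fin m) (ρ : Fin l → Fin n) (hπ : Function.Injective π)
    (hπ' : Function.Injective π') (hρ : Function.Injective ρ)
    (hcomp : π ∘ π' = ρ) (x : Qu K c I l) :
    ind K c I hmap m n π hπ (ind K c I hmap l m π' hπ' x)
      = ind K c I hmap l n ρ hρ x := by
  subst hcomp
  obtain ⟨y, rfl⟩ := Ideal.Quotient.mk_surjective
    (I := I l) (x : MvPolynomial (Fin c × Fin l) K ⧸ I l)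
  show Ideal.quotientMap _ _ _ (Ideal.quotientMap _ _ _ (Ideal.Quotient.mk _ y)) = _
  simp only [Ideal.quotientMap_mk, AlgHom.toRingHom_eq_coe, RingHom.coe_coe]
  rw [rename_rename]
  rfl

/-- The injection `[n₀+1] → [n₀+n]` fixing `[n₀]` and sending `n₀+1` to `n₀+j`. -/
def iotaJ (n₀ n : ℕ) (j : Fin n) : Fin (n₀ + 1) → Fin (n₀ + n) :=
  fun i => if h : (i : ℕ) < n₀ then ⟨(i : ℕ), lt_of_lt_of_le h (Nat.le_add_right _ _)⟩
    else ⟨n₀ + (j : ℕ), Nat.add_lt_add_left j.isLt n₀⟩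

theorem iotaJ_inj (n₀ n : ℕ) (j : Fin n) : Function.Injective (iotaJ n₀ n j) := by
  intro a b hab
  have ha := a.isLt
  have hb := b.isLt
  simp only [iotaJ] at hab
  split_ifs at hab with h1 h2 h2 <;>
    · apply Fin.ext
      have hv := congrArg Fin.val hab
      simp only at hv
      omega

variable (hmap : ChainMap K c I) (n₀ : ℕ) (h : Qu K c I n₀)

/-- The image of `h` in `A_{n₀+n}/I_{n₀+n}`. -/
noncomputable def hImg (n : ℕ) : Qu K c I (n₀ + n) :=
  ind K c I hmap n₀ (n₀ + n) (Fin.castAdd n) (castAdd_inj n₀ n) h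

/-- `B'_n = (A_{n₀+n}/I_{n₀+n})[1/h]`. -/
noncomputable abbrev Bp (n : ℕ) : Type := Localization.Away (hImg K c I hmap n₀ h n)

/-- The structure homomorphism `B'_0 = (A_{n₀}/I_{n₀})[1/h] → B'_n`. -/
noncomputable def structMap (n : ℕ) : Localization.Away h →+* Bp K c I hmap n₀ h n :=
  Localization.awayLift
    ((algebraMap (Qu K c I (n₀ + n)) (Bp K c I hmap n₀ h n)).comp
      (ind K c I hmap n₀ (n₀ + n) (Fin.castAdd n) (castAdd_inj n₀ n))) h
    (IsLocalization.map_units (Bp K c I hmap n₀ h n)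
      ⟨hImg K c I hmap n₀ h n, Submonoid.mem_powers _⟩)

theorem iotaJ_comp_castAdd (n₀ n : ℕ) (j : Fin n) :
    iotaJ n₀ n j ∘ (Fin.castAdd 1) = Fin.castAdd n := by
  funext i
  simp only [Function.comp_apply, iotaJ]
  rw [dif_pos (by simpa using i.isLt)]
  apply Fin.ext
  simp

theorem ind_iotaJ_hImg (n : ℕ) (j : Fin n) :
    ind K c I hmap (n₀ + 1) (n₀ + n) (iotaJ n₀ n j) (iotaJ_inj n₀ n j)
        (hImg K c I hmap n₀ h 1)
      = hImg K c I hmap n₀ h n := by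
  unfold hImg
  exact ind_ind K c I hmap n₀ (n₀ + 1) (n₀ + n) (iotaJ n₀ n j) (Fin.castAdd 1)
    (Fin.castAdd n) (iotaJ_inj n₀ n j) (castAdd_inj n₀ 1) (castAdd_inj n₀ n)
    (iotaJ_comp_castAdd n₀ n j) h

/-- The homomorphism `ι_j : B'_1 → B'_n` induced by the injection `[n₀+1] → [n₀+n]`
fixing `[n₀]` and sending `n₀+1` to `n₀+j`. -/
noncomputable def iotaLoc (n : ℕ) (j : Fin n) :
    Bp K c I hmap n₀ h 1 →+* Bp K c I hmap n₀ h n :=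
  Localization.awayLift
    ((algebraMap (Qu K c I (n₀ + n)) (Bp K c I hmap n₀ h n)).comp
      (ind K c I hmap (n₀ + 1) (n₀ + n) (iotaJ n₀ n j) (iotaJ_inj n₀ n j)))
    (hImg K c I hmap n₀ h 1)
    (by
      have hkey := ind_iotaJ_hImg K c I hmap n₀ h n j
      rw [RingHom.comp_apply, hkey]
      exact IsLocalization.map_units (Bp K c I hmap n₀ h n)
        ⟨hImg K c I hmap n₀ h n, Submonoid.mem_powers _⟩)

theorem iotaLoc_comp_structMap (n : ℕ) (j : Fin n) :
    (iotaLoc K c I hmap n₀ h n j).comp (structMap K c I hmap n₀ h 1)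
      = structMap K c I hmap n₀ h n := by
  apply IsLocalization.ringHom_ext (Submonoid.powers h)
  ext x
  have h1 : ∀ y : Qu K c I (n₀ + 1),
      iotaLoc K c I hmap n₀ h n j (algebraMap _ (Bp K c I hmap n₀ h 1) y)
        = algebraMap _ (Bp K c I hmap n₀ h n)
          (ind K c I hmap (n₀ + 1) (n₀ + n) (iotaJ n₀ n j) (iotaJ_inj n₀ n j) y) :=
    fun y => IsLocalization.Away.lift_eq (hImg K c I hmap n₀ h 1)
      (g := (algebraMap (Qu K c I (n₀ + n)) (Bp K c I hmap n₀ h n)).comp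
        (ind K c I hmap (n₀ + 1) (n₀ + n) (iotaJ n₀ n j) (iotaJ_inj n₀ n j)))
      (by
        rw [RingHom.comp_apply, ind_iotaJ_hImg K c I hmap n₀ h n j]
        exact IsLocalization.map_units (Bp K c I hmap n₀ h n)
          ⟨hImg K c I hmap n₀ h n, Submonoid.mem_powers _⟩) y
  have h2 : ∀ m : ℕ, structMap K c I hmap n₀ h m (algebraMap _ (Localization.Away h) x)
        = algebraMap _ (Bp K c I hmap n₀ h m)
          (ind K c I hmap n₀ (n₀ + m) (Fin.castAdd m) (castAdd_inj n₀ m) x) :=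
    fun m => IsLocalization.Away.lift_eq h
      (g := (algebraMap (Qu K c I (n₀ + m)) (Bp K c I hmap n₀ h m)).comp
        (ind K c I hmap n₀ (n₀ + m) (Fin.castAdd m) (castAdd_inj n₀ m)))
      (IsLocalization.map_units (Bp K c I hmap n₀ h m)
        ⟨hImg K c I hmap n₀ h m, Submonoid.mem_powers _⟩) x
  simp only [RingHom.coe_comp, Function.comp_apply]
  rw [h2, h2, h1]
  rw [ind_ind K c I hmap n₀ (n₀ + 1) (n₀ + n) (iotaJ n₀ n j) (Fin.castAdd 1)
    (Fin.castAdd n) (iotaJ_inj n₀ n j) (castAdd_inj n₀ 1) (castAdd_inj n₀ n)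
    (iotaJ_comp_castAdd n₀ n j) x]

variable (h' : Localization.Away h)

/-- `B''_0 = B'_0[1/h']`. -/
noncomputable def Bpp0 : Type := Localization.Away h'

noncomputable instance : CommRing (Bpp0 K c I n₀ h h') :=
  inferInstanceAs (CommRing (Localization.Away h'))

/-- `B''_n = B'_n[1/h']`, where `h'` is taken into `B'_n` via the structure map. -/
noncomputable def Bpp (n : ℕ) : Type :=
  Localization.Away (structMap K c I hmap n₀ h n h')

noncomputable instance (n : ℕ) : CommRing (Bpp K c I hmap n₀ h h' n) :=
  inferInstanceAs (CommRing (Localization.Away (structMap K c I hmap n₀ h n h')))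

noncomputable instance (n : ℕ) :
    Algebra (Bp K c I hmap n₀ h n) (Bpp K c I hmap n₀ h h' n) :=
  inferInstanceAs (Algebra _ (Localization.Away (structMap K c I hmap n₀ h n h')))

noncomputable instance (n : ℕ) :
    IsLocalization (Submonoid.powers (structMap K c I hmap n₀ h n h'))
      (Bpp K c I hmap n₀ h h' n) :=
  inferInstanceAs
    (IsLocalization (Submonoid.powers (structMap K c I hmap n₀ h n h'))
      (Localization.Away (structMap K c I hmap n₀ h n h')))

/-- The structure homomorphism `B''_0 = B'_0[1/h'] → B''_n`. -/
noncomputable def structMap₂ (n : ℕ) :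
    Bpp0 K c I n₀ h h' →+* Bpp K c I hmap n₀ h h' n :=
  Localization.awayLift
    ((algebraMap (Bp K c I hmap n₀ h n) (Bpp K c I hmap n₀ h h' n)).comp
      (structMap K c I hmap n₀ h n)) h'
    (by
      rw [RingHom.comp_apply]
      exact IsLocalization.map_units (Bpp K c I hmap n₀ h h' n)
        ⟨structMap K c I hmap n₀ h n h', Submonoid.mem_powers _⟩)

/-- The homomorphism `ι''_j : B''_1 → B''_n` induced by `ι_j : B'_1 → B'_n`. -/
noncomputable def iotaLoc₂ (n : ℕ) (j : Fin n) :
    Bpp K c I hmap n₀ h h' 1 →+* Bpp K c I hmap n₀ h h' n :=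
  Localization.awayLift
    ((algebraMap (Bp K c I hmap n₀ h n) (Bpp K c I hmap n₀ h h' n)).comp
      (iotaLoc K c I hmap n₀ h n j)) (structMap K c I hmap n₀ h 1 h')
    (by
      have hc := RingHom.congr_fun (iotaLoc_comp_structMap K c I hmap n₀ h n j) h'
      rw [RingHom.comp_apply] at hc
      rw [RingHom.comp_apply, hc]
      exact IsLocalization.map_units (Bpp K c I hmap n₀ h h' n)
        ⟨structMap K c I hmap n₀ h n h', Submonoid.mem_powers _⟩)

end WideMatrixShift

section

open scoped MonomialOrder

theorem Set.exists_finite_subset_forall_exists_le {α : Type*} [PartialOrder α]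
    [WellQuasiOrderedLE α] (s : Set α) :
    ∃ t ⊆ s, t.Finite ∧ ∀ a ∈ s, ∃ b ∈ t, b ≤ a := by
  refine ⟨{a | Minimal (· ∈ s) a}, fun a ha => ha.prop, ?_, fun a ha => ?_⟩
  · exact WellQuasiOrderedLE.finite_of_isAntichain (setOfPred_minimal_antichain _)
  · obtain ⟨b, hba, hb⟩ := exists_minimal_le_of_wellFoundedLT (· ∈ s) a ha
    exact ⟨b, hb, hba⟩

theorem MonomialOrder.eq_zero_or_degree_lt {σ R : Type*} [CommRing R] (m : MonomialOrder σ)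
    {q : MvPolynomial σ R} {d : σ →₀ ℕ} (hd : m.degree q ≼[m] d) (hc : q.coeff d = 0) :
    q = 0 ∨ m.degree q ≺[m] d := by
  rcases hd.lt_or_eq with h | h
  · exact Or.inr h
  · left
    rw [← m.toSyn.injective h] at hc
    exact m.coeff_degree_eq_zero_iff.mp hc

theorem MonomialOrder.exists_pow_smul_mem_span_sup {σ R : Type*} [CommRing R] (m : MonomialOrder σ)
    (J : Ideal (MvPolynomial σ R)) (E : Set (σ →₀ ℕ)) (f : R)
    (hE : ∀ e ∈ E, ∃ g ∈ J, m.degree g ≤ e ∧ m.leadingCoeff g ∣ f) (p : MvPolynomial σ R) :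
    ∃ k : ℕ, f ^ k • p ∈
      Submodule.span R ((fun e => monomial e (1 : R)) '' Eᶜ) ⊔ J.restrictScalars R := by
  classical
  set N := Submodule.span R ((fun e => monomial e (1 : R)) '' Eᶜ) ⊔ J.restrictScalars R
  induction hd : m.toSyn (m.degree p) using WellFoundedLT.induction generalizing p with
  | ind d ih =>
  subst hd
  have key : ∀ q : MvPolynomial σ R, m.degree q ≼[m] m.degree p → q.coeff (m.degree p) = 0 →
      ∃ k : ℕ, f ^ k • q ∈ N := by
    intro q hq hc
    rcases m.eq_zero_or_degree_lt hq hc with rfl | hlt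
    · exact ⟨0, by simp⟩
    · exact ih _ hlt q rfl
  by_cases he : m.degree p ∈ E
  · obtain ⟨g, hgJ, hge, u, hu⟩ := hE _ he
    have hdeg : (m.degree p - m.degree g) + m.degree g = m.degree p := tsub_add_cancel_of_le hge
    set w := monomial (m.degree p - m.degree g) (u * m.leadingCoeff p) * g with hw
    have hwJ : w ∈ J := J.mul_mem_left _ hgJ
    obtain ⟨k, hk⟩ := key (f • p - w) (by
        refine m.degree_sub_le.trans (sup_le m.degree_smul_le ?_)
        refine m.degree_mul_le.trans ?_
        rw [map_add]
        refine (add_le_add_left (m.degree_monomial_le _) _).trans ?_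
        rw [← map_add, hdeg]) (by
        rw [coeff_sub, coeff_smul, hw]
        conv_lhs => enter [2, 1]; rw [← hdeg]
        rw [coeff_monomial_mul, hu]
        simp only [MonomialOrder.leadingCoeff, smul_eq_mul]
        ring)
    refine ⟨k + 1, ?_⟩
    have : f ^ (k + 1) • p = f ^ k • (f • p - w) + f ^ k • w := by
      rw [smul_sub, sub_add_cancel, smul_smul, pow_succ]
    rw [this]
    exact N.add_mem hk (N.smul_mem _ (Submodule.mem_sup_right hwJ))
  · set w := monomial (m.degree p) (m.leadingCoeff p) with hw
    have hwN : w ∈ N := by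
      have : w = m.leadingCoeff p • monomial (m.degree p) (1 : R) := by simp [hw, smul_monomial]
      rw [this]
      exact N.smul_mem _ (Submodule.mem_sup_left (Submodule.subset_span ⟨_, he, rfl⟩))
    obtain ⟨k, hk⟩ := key (p - w)
      (m.degree_sub_le.trans (sup_le le_rfl (m.degree_monomial_le _)))
      (by rw [coeff_sub, hw, coeff_monomial, if_pos rfl, MonomialOrder.leadingCoeff, sub_self])
    refine ⟨k, ?_⟩
    have : f ^ k • p = f ^ k • (p - w) + f ^ k • w := by rw [smul_sub, sub_add_cancel]
    rw [this]
    exact N.add_mem hk (N.smul_mem _ hwN)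

theorem IsLocalization.Away.isUnit_algebraMap_left {R S : Type*} [CommRing R] [CommRing S]
    [Algebra R S] (r f : R) [IsLocalization.Away (r * f) S] : IsUnit (algebraMap R S r) := by
  have h := IsLocalization.Away.algebraMap_isUnit (S := S) (r * f)
  rw [map_mul] at h
  exact isUnit_of_mul_isUnit_left h

theorem IsLocalization.Away.isDomain_of_annihilator {R S : Type*} [CommRing R] [CommRing S]
    [Algebra R S] {r f : R} (hprime : ∀ a b, r * (a * b) = 0 → r * a = 0 ∨ r * b = 0)
    (hf : ∀ k : ℕ, r * (r * f) ^ k ≠ 0) [IsLocalization.Away (r * f) S] : IsDomain S := by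
  have hzero : ∀ a : R, r * a = 0 → algebraMap R S a = 0 := fun a ha => by
    rw [← (IsLocalization.Away.isUnit_algebraMap_left (S := S) r f).mul_right_eq_zero,
      ← map_mul, ha, map_zero]
  have : Nontrivial S := by
    refine ⟨0, 1, fun h01 => ?_⟩
    rw [← map_one (algebraMap R S), ← map_zero (algebraMap R S)] at h01
    obtain ⟨n, hn⟩ := IsLocalization.Away.exists_of_eq (r * f) h01
    exact hf n (by rw [mul_one, mul_zero] at hn; rw [← hn, mul_zero])
  have : NoZeroDivisors S := by
    refine ⟨fun {a b} hab => ?_⟩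
    obtain ⟨x, s, rfl⟩ := IsLocalization.exists_mk'_eq (Submonoid.powers (r * f)) a
    obtain ⟨y, t, rfl⟩ := IsLocalization.exists_mk'_eq (Submonoid.powers (r * f)) b
    simp only [← IsLocalization.mk'_mul, IsLocalization.mk'_eq_zero_iff] at hab
    obtain ⟨⟨_, n, rfl⟩, hn⟩ := hab
    have h1 : r * ((r * f) ^ n * (x * y)) = 0 := by
      simp only at hn
      rw [hn, mul_zero]
    refine (hprime _ _ ((hprime _ _ h1).resolve_left (hf n))).imp (fun h => ?_) (fun h => ?_) <;>
    · rw [IsLocalization.mk'_eq_mul_mk'_one, hzero _ h, zero_mul]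
  exact NoZeroDivisors.to_isDomain S

/-- If the annihilator of `r` is a prime not containing `r`, an algebra of finite type becomes free
after inverting a suitable multiple `r * f` of `r` outside that prime. -/
theorem Algebra.FiniteType.exists_free_away_mul {R B : Type*} [CommRing R] [CommRing B]
    [Algebra R B] [Algebra.FiniteType R B] {r : R} (hr : r * r ≠ 0)
    (hprime : ∀ a b, r * (a * b) = 0 → r * a = 0 ∨ r * b = 0) :
    ∃ f : R, r * f ≠ 0 ∧ ∀ (S T : Type*) [CommRing S] [CommRing T] [Algebra R S] [Algebra B T]
      [Algebra S T] [Algebra R T] [IsScalarTower R B T] [IsScalarTower R S T]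
      [IsLocalization.Away (r * f) S] [IsLocalization.Away (algebraMap R B (r * f)) T],
      Module.Free S T := by
  classical
  obtain ⟨n, φ, hφ⟩ := Algebra.FiniteType.iff_quotient_mvPolynomial''.mp
    (inferInstance : Algebra.FiniteType R B)
  let m : MonomialOrder (Fin n) := MonomialOrder.lex
  let D : Set (Fin n →₀ ℕ) :=
    {e | ∃ g : MvPolynomial (Fin n) R, φ (r • g) = 0 ∧ r • g ≠ 0 ∧ m.degree (r • g) = e}
  obtain ⟨t, htD, htfin, ht⟩ := D.exists_finite_subset_forall_exists_le
  choose! g hg0 hgne hgdeg using fun e (he : e ∈ t) => htD he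
  let f : R := ∏ e ∈ htfin.toFinset, m.leadingCoeff (r • g e)
  have hlead : ∀ e ∈ t, r * m.leadingCoeff (r • g e) ≠ 0 := by
    intro e he h0
    have h1 : m.leadingCoeff (r • g e) = r * (g e).coeff (m.degree (r • g e)) := by
      simp [MonomialOrder.leadingCoeff]
    rw [h1] at h0
    rcases hprime _ _ h0 with h2 | h2
    · exact hr h2
    · exact m.leadingCoeff_ne_zero_iff.mpr (hgne e he) (h1.trans h2)
  have hf : r * f ≠ 0 := by
    refine Finset.prod_induction (fun e => m.leadingCoeff (r • g e)) (fun x => r * x ≠ 0)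
      (fun a b ha hb hab => (hprime a b hab).elim ha hb) ?_
      (fun e he => hlead e (htfin.mem_toFinset.mp he))
    rw [mul_one]
    rintro rfl
    exact hr (zero_mul 0)
  refine ⟨f, hf, ?_⟩
  intro S T _ _ _ _ _ _ _ _ _ _
  let E : Set (Fin n →₀ ℕ) := {e | ∃ d ∈ t, d ≤ e}
  let v : (Eᶜ : Set (Fin n →₀ ℕ)) → T := fun e => algebraMap B T (φ (monomial e.1 1))
  have hru := IsLocalization.Away.isUnit_algebraMap_left (S := S) r f
  have hli : LinearIndependent S v := by
    rw [linearIndependent_iff']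
    intro s c hc i hi
    obtain ⟨b, hb⟩ := IsLocalization.exist_integer_multiples_of_finset
      (Submonoid.powers (r * f)) (s.image c)
    have hb' : ∀ i ∈ s, ∃ a : R, algebraMap R S a = algebraMap R S b * c i := by
      intro i hi
      obtain ⟨a, ha⟩ := hb (c i) (Finset.mem_image_of_mem c hi)
      exact ⟨a, by rw [ha, Algebra.smul_def]⟩
    choose! a ha using hb'
    let P : MvPolynomial (Fin n) R := ∑ j ∈ s, a j • monomial j.1 1
    have hP : algebraMap B T (φ P) = algebraMap B T 0 := by
      have : algebraMap B T (φ P) = algebraMap S T (algebraMap R S b) * ∑ j ∈ s, c j • v j := by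
        simp only [P, map_sum, map_smul, Finset.mul_sum]
        refine Finset.sum_congr rfl fun j hj => ?_
        rw [Algebra.smul_def, map_mul, ← IsScalarTower.algebraMap_apply R B T,
          IsScalarTower.algebraMap_apply R S T, ha j hj, Algebra.smul_def, map_mul, mul_assoc]
      rw [this, hc, mul_zero, map_zero]
    obtain ⟨k, hk⟩ := IsLocalization.Away.exists_of_eq (algebraMap R B (r * f)) hP
    have hQ : φ (r • ((r * f) ^ k • P)) = 0 := by
      rw [map_smul, map_smul, Algebra.smul_def ((r * f) ^ k), map_pow, hk, mul_zero, smul_zero]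
    have hcoeff : ∀ e, (r • ((r * f) ^ k • P)).coeff e =
        r * ((r * f) ^ k * ∑ j ∈ s, if j.1 = e then a j else 0) := by
      intro e
      simp only [P, coeff_smul, coeff_sum, coeff_monomial, smul_eq_mul, mul_ite, mul_one, mul_zero]
    have hQ0 : r • ((r * f) ^ k • P) = 0 := by
      by_contra hne
      obtain ⟨d, hdt, hd⟩ := ht _ ⟨_, hQ, hne, rfl⟩
      have hdc := m.coeff_degree_ne_zero_iff.mpr hne
      rw [hcoeff] at hdc
      obtain ⟨j, -, hj⟩ := Finset.exists_ne_zero_of_sum_ne_zero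
        (right_ne_zero_of_mul (right_ne_zero_of_mul hdc))
      have hje : j.1 = m.degree (r • ((r * f) ^ k • P)) := by
        by_contra hh
        exact hj (if_neg hh)
      exact j.2 ⟨d, hdt, hje ▸ hd⟩
    have hai : r * ((r * f) ^ k * a i) = 0 := by
      have := hcoeff i.1
      rw [hQ0, coeff_zero, Finset.sum_eq_single i (fun j _ hj => if_neg (fun hh => hj
        (Subtype.ext hh))) (fun hh => absurd hi hh), if_pos rfl] at this
      exact this.symm
    have hai' : algebraMap R S (a i) = 0 := by
      have := congrArg (algebraMap R S) hai
      rw [map_mul, map_mul, map_zero, hru.mul_right_eq_zero, map_pow,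
        ((IsLocalization.Away.algebraMap_isUnit (S := S) (r * f)).pow k).mul_right_eq_zero] at this
      exact this
    rw [ha i hi, (IsLocalization.map_units S b).mul_right_eq_zero] at hai'
    exact hai'
  have hspan : ⊤ ≤ Submodule.span S (Set.range v) := by
    intro x _
    have hmem : ∀ y ∈ Submodule.span R ((fun e => monomial e (1 : R)) '' Eᶜ),
        algebraMap B T (φ y) ∈ Submodule.span S (Set.range v) := by
      intro y hy
      induction hy using Submodule.span_induction with
      | mem y hy =>
        obtain ⟨e, he, rfl⟩ := hy
        exact Submodule.subset_span ⟨⟨e, he⟩, rfl⟩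
      | zero => simp
      | add y z _ _ hy hz => rw [map_add, map_add]; exact add_mem hy hz
      | smul c y _ hy =>
        rw [map_smul, Algebra.smul_def, map_mul, ← IsScalarTower.algebraMap_apply R B T,
          IsScalarTower.algebraMap_apply R S T, ← Algebra.smul_def]
        exact Submodule.smul_mem _ _ hy
    have hB : ∀ p : MvPolynomial (Fin n) R,
        algebraMap B T (φ p) ∈ Submodule.span S (Set.range v) := by
      intro p
      obtain ⟨k, hk⟩ := m.exists_pow_smul_mem_span_sup (RingHom.ker φ) E (r * f) (by
        rintro e ⟨d, hd, hde⟩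
        exact ⟨r • g d, hg0 d hd, (hgdeg d hd).trans_le hde, (Finset.dvd_prod_of_mem
          (fun e => m.leadingCoeff (r • g e)) (htfin.mem_toFinset.mpr hd)).mul_left r⟩) p
      obtain ⟨y, hy, z, hz, hyz⟩ := Submodule.mem_sup.mp hk
      have h1 := hmem y hy
      have h2 : φ y = algebraMap R B (r * f) ^ k * φ p := by
        rw [← map_pow, ← Algebra.smul_def, ← map_smul, ← hyz, map_add,
          show φ z = 0 from hz, add_zero]
      rw [h2, map_mul, map_pow, ← IsScalarTower.algebraMap_apply R B T,
        IsScalarTower.algebraMap_apply R S T, ← map_pow, ← Algebra.smul_def] at h1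
      exact (Submodule.smul_mem_iff_of_isUnit _
        ((IsLocalization.Away.algebraMap_isUnit (S := S) (r * f)).pow k)).mp h1
    obtain ⟨k, y, hy⟩ := IsLocalization.Away.surj (algebraMap R B (r * f)) x
    obtain ⟨p, rfl⟩ := hφ y
    have h1 := hB p
    rw [← hy, mul_comm, ← IsScalarTower.algebraMap_apply R B T,
      IsScalarTower.algebraMap_apply R S T, ← map_pow, ← Algebra.smul_def] at h1
    exact (Submodule.smul_mem_iff_of_isUnit _
      ((IsLocalization.Away.algebraMap_isUnit (S := S) (r * f)).pow k)).mp h1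
  exact Module.Free.of_basis (Module.Basis.mk hli hspan)

theorem exists_mul_self_ne_zero_and_annihilator_prime (R : Type*) [CommRing R] [IsNoetherianRing R]
    [IsReduced R] [Nontrivial R] :
    ∃ r : R, r * r ≠ 0 ∧ ∀ a b, r * (a * b) = 0 → r * a = 0 ∨ r * b = 0 := by
  obtain ⟨p, hp⟩ := associatedPrimes.nonempty R R
  obtain ⟨hp, r, hr⟩ := isAssociatedPrime_iff.mp hp
  have hmem : ∀ a, a ∈ p ↔ r * a = 0 := fun a => by
    rw [hr, Submodule.mem_colon_singleton, smul_eq_mul, Submodule.mem_bot, mul_comm]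
  refine ⟨r, fun h => hp.ne_top ?_, fun a b hab => ?_⟩
  · rw [Ideal.eq_top_iff_one, hmem, mul_one]
    exact IsReduced.eq_zero r ⟨2, by rw [sq, h]⟩
  · simp only [← hmem] at hab ⊢
    exact hp.mem_or_mem hab

/-- Over a reduced Noetherian base, an algebra of finite type becomes free over a domain after
inverting a suitable element of the base. -/
theorem Algebra.FiniteType.exists_isDomain_and_free_away (R B : Type*) [CommRing R] [CommRing B]
    [Algebra R B] [IsNoetherianRing R] [IsReduced R] [Nontrivial R] [Algebra.FiniteType R B] :
    ∃ f : R, f ≠ 0 ∧ ∀ (S T : Type*) [CommRing S] [CommRing T] [Algebra R S] [Algebra B T]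
      [Algebra S T] [Algebra R T] [IsScalarTower R B T] [IsScalarTower R S T]
      [IsLocalization.Away f S] [IsLocalization.Away (algebraMap R B f) T],
      IsDomain S ∧ Module.Free S T := by
  obtain ⟨r, hr, hprime⟩ := exists_mul_self_ne_zero_and_annihilator_prime R
  obtain ⟨f, hf, hfree⟩ := Algebra.FiniteType.exists_free_away_mul (B := B) hr hprime
  refine ⟨r * f, hf, fun S T => ?_⟩
  intros
  have hpow : ∀ k : ℕ, r * (r * f) ^ k ≠ 0 := by
    intro k
    induction k with
    | zero => exact fun h => hf (by rw [pow_zero, mul_one] at h; rw [h, zero_mul])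
    | succ k ih =>
      intro h
      rw [pow_succ] at h
      exact ((hprime _ _ ((hprime _ _ h).resolve_left ih)).elim hr hf)
  exact ⟨IsLocalization.Away.isDomain_of_annihilator hprime hpow, hfree S T⟩

namespace PiTensorProduct

variable {ι R : Type*} [Fintype ι] [CommRing R] {A : ι → Type*} [∀ i, CommRing (A i)]
  [∀ i, Algebra R (A i)]

/-- The algebra homomorphism `⨂ xᵢ ↦ ∏ fᵢ xᵢ` out of a finite tensor product. -/
noncomputable def prodAlgHom {C : Type*} [CommRing C] [Algebra R C] (f : ∀ i, A i →ₐ[R] C) :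
    (⨂[R] i, A i) →ₐ[R] C :=
  liftAlgHom ((MultilinearMap.mkPiAlgebra R ι C).compLinearMap fun i => (f i).toLinearMap)
    (by simp) (by simp [Finset.prod_mul_distrib])

theorem prodAlgHom_tprod {C : Type*} [CommRing C] [Algebra R C] (f : ∀ i, A i →ₐ[R] C)
    (x : ∀ i, A i) : prodAlgHom f (tprod R x) = ∏ i, f i (x i) := by
  change lift _ (tprod R x) = _
  rw [lift.tprod]
  rfl

theorem prod_map_mulSingle [DecidableEq ι] {C : Type*} [CommMonoid C] {F : ι → Type*}
    [∀ i, FunLike (F i) (A i) C] [∀ i, MonoidHomClass (F i) (A i) C] (f : ∀ i, F i)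
    (i : ι) (a : A i) : ∏ j, f j (Pi.mulSingle i a j) = f i a := by
  rw [Finset.prod_eq_single i _ (fun h => absurd (Finset.mem_univ i) h), Pi.mulSingle_eq_same]
  intro j _ hj
  rw [Pi.mulSingle_eq_of_ne hj, map_one]

theorem prodAlgHom_singleAlgHom [DecidableEq ι] {C : Type*} [CommRing C] [Algebra R C]
    (f : ∀ i, A i →ₐ[R] C) (i : ι) (a : A i) :
    prodAlgHom f (singleAlgHom (R := R) i a) = f i a := by
  rw [singleAlgHom_apply, prodAlgHom_tprod]
  exact prod_map_mulSingle f i a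

end PiTensorProduct

/-- Let `V` and `W` be generated by the images of maps `sV i : B → V` and `sW i : T → W`, where `T`
is the localization of `B` away from `f`. If `V ≃ C` carries `sV` to `g`, then the map from `W` to
the localization `U` of `C` induced by the localizations of the `g i` is bijective. -/
theorem IsLocalization.Away.bijective_of_generators {ι R S B T C U V W : Type*} [CommRing R]
    [CommRing S] [CommRing B] [CommRing T] [CommRing C] [CommRing U] [CommRing V] [CommRing W]
    [Algebra R S] [Algebra R B] [Algebra R C] [Algebra R U] [Algebra R V] [Algebra R W]
    [Algebra B T] [Algebra C U] [Algebra S T] [Algebra S U] [Algebra S W]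
    [IsScalarTower R C U] [IsScalarTower R S U] [IsScalarTower R S W]
    (f : R) [IsLocalization.Away f S] [IsLocalization.Away (algebraMap R B f) T]
    [IsLocalization.Away (algebraMap R C f) U]
    (g : ι → B → C) (k : ι → T →ₐ[S] U)
    (hk : ∀ i b, k i (algebraMap B T b) = algebraMap C U (g i b))
    (sV : ι → B → V) (sW : ι → T →ₐ[S] W)
    (hV : ∀ p q : V →ₐ[R] U, (∀ i b, p (sV i b) = q (sV i b)) → p = q)
    (hW : ∀ p q : W →ₐ[S] W, (∀ i, p.comp (sW i) = q.comp (sW i)) → p = q)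
    (α : V →ₐ[R] W) (hα : ∀ i b, α (sV i b) = sW i (algebraMap B T b))
    (Φ : V →ₐ[R] C) (hΦ : ∀ i b, Φ (sV i b) = g i b) (hbij : Function.Bijective Φ)
    (Ψ : W →ₐ[S] U) (hΨ : ∀ i t, Ψ (sW i t) = k i t) :
    Function.Bijective Ψ := by
  let e := AlgEquiv.ofBijective Φ hbij
  let β : C →ₐ[R] W := α.comp e.symm.toAlgHom
  have hβ : IsUnit (β (algebraMap R C f)) := by
    rw [β.commutes, IsScalarTower.algebraMap_apply R S W]
    exact (IsLocalization.Away.algebraMap_isUnit f).map _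
  let γ : U →+* W := IsLocalization.Away.lift (algebraMap R C f) (g := β.toRingHom) hβ
  have hγ : ∀ c, γ (algebraMap C U c) = β c := fun c =>
    IsLocalization.Away.lift_eq (algebraMap R C f) (g := β.toRingHom) hβ c
  have hγS : ∀ s, γ (algebraMap S U s) = algebraMap S W s := by
    intro s
    have : γ.comp (algebraMap S U) = algebraMap S W := by
      refine IsLocalization.ringHom_ext (Submonoid.powers f) (RingHom.ext fun x => ?_)
      simp only [RingHom.comp_apply]
      rw [← IsScalarTower.algebraMap_apply R S U, IsScalarTower.algebraMap_apply R C U, hγ,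
        β.commutes, IsScalarTower.algebraMap_apply R S W]
    exact RingHom.congr_fun this s
  let Γ : U →ₐ[S] W := { γ with commutes' := hγS }
  have hβΦ : ∀ z, β (Φ z) = α z := fun z => congrArg α (e.symm_apply_apply z)
  have hleft : Γ.comp Ψ = AlgHom.id S W := by
    refine hW _ _ fun i => AlgHom.coe_ringHom_injective ?_
    refine IsLocalization.ringHom_ext (Submonoid.powers (algebraMap R B f))
      (RingHom.ext fun b => ?_)
    change γ (Ψ (sW i (algebraMap B T b))) = sW i (algebraMap B T b)
    rw [hΨ, hk, hγ, ← hΦ, hβΦ, hα]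
  have hright : Ψ.comp Γ = AlgHom.id S U := by
    refine AlgHom.coe_ringHom_injective ?_
    refine IsLocalization.ringHom_ext (Submonoid.powers (algebraMap R C f))
      (RingHom.ext fun c => ?_)
    obtain ⟨z, rfl⟩ := hbij.2 c
    change Ψ (γ (algebraMap C U (Φ z))) = algebraMap C U (Φ z)
    rw [hγ, hβΦ]
    have : (Ψ.restrictScalars R).comp α = (IsScalarTower.toAlgHom R C U).comp Φ := by
      refine hV _ _ fun i b => ?_
      change Ψ (α (sV i b)) = algebraMap C U (Φ (sV i b))
      rw [hα, hΦ, hΨ, hk]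
    exact DFunLike.congr_fun this z
  exact Function.bijective_iff_has_inverse.mpr
    ⟨Γ, DFunLike.congr_fun hleft, DFunLike.congr_fun hright⟩

/-- A presentation of `C` as a finite tensor product over `R` is preserved by inverting an element
of `R`. -/
theorem PiTensorProduct.bijective_prodAlgHom_of_isLocalization_away {ι R S B T C U : Type*}
    [Fintype ι] [CommRing R] [CommRing S] [CommRing B]
    [CommRing T] [CommRing C] [CommRing U] [Algebra R S] [Algebra R B] [Algebra R T] [Algebra R C]
    [Algebra R U] [Algebra B T] [Algebra C U] [Algebra S T] [Algebra S U]
    [IsScalarTower R B T] [IsScalarTower R S T] [IsScalarTower R C U] [IsScalarTower R S U]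
    (f : R) [IsLocalization.Away f S] [IsLocalization.Away (algebraMap R B f) T]
    [IsLocalization.Away (algebraMap R C f) U]
    (g : ι → B →+* C) (k : ι → T →ₐ[S] U)
    (hk : ∀ i b, k i (algebraMap B T b) = algebraMap C U (g i b))
    (Φ : (⨂[R] _ : ι, B) →ₐ[R] C) (hΦ : ∀ x, Φ (tprod R x) = ∏ i, g i (x i))
    (hbij : Function.Bijective Φ) :
    Function.Bijective (prodAlgHom k) := by
  classical
  have : IsScalarTower R S (⨂[S] _ : ι, T) := inferInstance
  let sW : ι → T →ₐ[S] ⨂[S] _ : ι, T := singleAlgHom (R := S) (A := fun _ => T)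
  let a : ι → B →ₐ[R] ⨂[S] _ : ι, T := fun i =>
    { ((sW i).toRingHom.comp (algebraMap B T)) with
      commutes' := fun r => by
        change sW i (algebraMap B T (algebraMap R B r)) = _
        rw [← IsScalarTower.algebraMap_apply R B T, IsScalarTower.algebraMap_apply R S T,
          (sW i).commutes]
        exact (IsScalarTower.algebraMap_apply R S (⨂[S] _ : ι, T) r).symm }
  refine IsLocalization.Away.bijective_of_generators f (fun i => g i) k hk
    (fun i => singleAlgHom (R := R) (A := fun _ => B) i) sW (fun p q h => ?_) (fun p q h => ?_)
    (prodAlgHom a) (fun i b => ?_) Φ (fun i b => ?_) hbij (prodAlgHom k) (fun i t => ?_)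
  · exact algHom_ext fun i => AlgHom.ext fun b => h i b
  · exact algHom_ext h
  · exact prodAlgHom_singleAlgHom a i b
  · rw [singleAlgHom_apply, hΦ]
    exact prod_map_mulSingle (A := fun _ => B) g i b
  · exact prodAlgHom_singleAlgHom k i t


theorem Ideal.comap_algebraMap_eq_bot_of_mem_minimalPrimes {S U : Type*} [CommRing S] [IsDomain S]
    [CommRing U] [Algebra S U] [Module.Free S U] {P : Ideal U} (hP : P ∈ minimalPrimes U) :
    Ideal.comap (algebraMap S U) P = ⊥ := by
  refine (Submodule.eq_bot_iff _).mpr fun s hs => ?_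
  by_contra hne
  refine Set.disjoint_left.mp (Ideal.disjoint_nonZeroDivisors_of_mem_minimalPrimes hP) hs ?_
  refine mem_nonZeroDivisors_iff_right.mpr fun x hx => ?_
  rw [mul_comm, ← Algebra.smul_def] at hx
  exact (smul_eq_zero.mp hx).resolve_left hne

theorem IsLocalization.Away.bijective_of_comp_algebraMap {A B X Y : Type*} [CommRing A] [CommRing B]
    [CommRing X] [CommRing Y] [Algebra A X] [Algebra B Y] {g : A →+* B}
    (hg : Function.Bijective g) (a : A) [IsLocalization.Away a X] [IsLocalization.Away (g a) Y]
    {f : X →+* Y} (hf : f.comp (algebraMap A X) = (algebraMap B Y).comp g) :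
    Function.Bijective f := by
  let e := RingEquiv.ofBijective g hg
  have H : (Submonoid.powers a).map e.toMonoidHom = Submonoid.powers (g a) :=
    Submonoid.map_powers _ _
  have : f = (IsLocalization.ringEquivOfRingEquiv X Y e H : X →+* Y) := by
    refine IsLocalization.ringHom_ext (Submonoid.powers a) (hf.trans (RingHom.ext fun x => ?_))
    simp [e]
  rw [this]
  exact (IsLocalization.ringEquivOfRingEquiv X Y e H).bijective

/-- Homomorphism form of `Algebra.FiniteType.exists_isDomain_and_free_away`. -/
theorem RingHom.FiniteType.exists_isDomain_and_free_away {R B : Type*} [CommRing R] [CommRing B]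
    [IsNoetherianRing R] [IsReduced R] [Nontrivial R] {s : R →+* B} (hs : s.FiniteType) :
    ∃ f : R, f ≠ 0 ∧ ∀ (S T : Type*) [CommRing S] [CommRing T] [Algebra R S] [Algebra B T]
      [IsLocalization.Away f S] [IsLocalization.Away (s f) T] (t : S →+* T),
      t.comp (algebraMap R S) = (algebraMap B T).comp s →
      IsDomain S ∧ (letI := t.toAlgebra; Module.Free S T) := by
  let := s.toAlgebra
  have : Algebra.FiniteType R B := hs
  obtain ⟨f, hf, H⟩ := Algebra.FiniteType.exists_isDomain_and_free_away R B
  refine ⟨f, hf, fun S T _ _ _ _ _ _ t ht => ?_⟩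
  let := t.toAlgebra
  let : Algebra R T := ((algebraMap B T).comp s).toAlgebra
  have : IsScalarTower R B T := .of_algebraMap_eq' rfl
  have : IsScalarTower R S T := .of_algebraMap_eq' ht.symm
  have : IsLocalization.Away (algebraMap R B f) T := ‹IsLocalization.Away (s f) T›
  exact H S T

/-- Homomorphism form of `PiTensorProduct.bijective_prodAlgHom_of_isLocalization_away`. -/
theorem PiTensorProduct.exists_bijective_of_isLocalization_away {ι R S B T C U : Type*} [Fintype ι]
    [CommRing R] [CommRing S] [CommRing B] [CommRing T] [CommRing C] [CommRing U] [Algebra R S]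
    [Algebra B T] [Algebra C U] (f : R) (s₁ : R →+* B) (s : R →+* C) (t₁ : S →+* T) (t : S →+* U)
    [IsLocalization.Away f S] [IsLocalization.Away (s₁ f) T] [IsLocalization.Away (s f) U]
    (ht₁ : t₁.comp (algebraMap R S) = (algebraMap B T).comp s₁)
    (ht : t.comp (algebraMap R S) = (algebraMap C U).comp s)
    (g : ι → B →+* C) (hg : ∀ i, (g i).comp s₁ = s) (k : ι → T →+* U)
    (hk : ∀ i, (k i).comp (algebraMap B T) = (algebraMap C U).comp (g i))
    (hΦ : letI := s₁.toAlgebra; letI := s.toAlgebra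
      ∃ Φ : (⨂[R] _ : ι, B) →ₐ[R] C,
        (∀ x : ι → B, Φ (tprod R x) = ∏ i, g i (x i)) ∧ Function.Bijective Φ) :
    letI := t₁.toAlgebra; letI := t.toAlgebra
    ∃ Ψ : (⨂[S] _ : ι, T) →ₐ[S] U,
      (∀ x : ι → T, Ψ (tprod S x) = ∏ i, k i (x i)) ∧ Function.Bijective Ψ := by
  let := s₁.toAlgebra
  let := s.toAlgebra
  let := t₁.toAlgebra
  let := t.toAlgebra
  let : Algebra R T := ((algebraMap B T).comp s₁).toAlgebra
  let : Algebra R U := ((algebraMap C U).comp s).toAlgebra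
  have : IsScalarTower R B T := .of_algebraMap_eq' rfl
  have : IsScalarTower R S T := .of_algebraMap_eq' ht₁.symm
  have : IsScalarTower R C U := .of_algebraMap_eq' rfl
  have : IsScalarTower R S U := .of_algebraMap_eq' ht.symm
  have : IsLocalization.Away (algebraMap R B f) T := ‹IsLocalization.Away (s₁ f) T›
  have : IsLocalization.Away (algebraMap R C f) U := ‹IsLocalization.Away (s f) U›
  have hkt (i : ι) : (k i).comp t₁ = t := by
    refine IsLocalization.ringHom_ext (Submonoid.powers f) ?_
    rw [RingHom.comp_assoc, ht₁, ← RingHom.comp_assoc, hk, RingHom.comp_assoc, hg, ht]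
  obtain ⟨Φ, hΦ, hbij⟩ := hΦ
  let k' : ι → T →ₐ[S] U := fun i => { k i with commutes' := RingHom.congr_fun (hkt i) }
  exact ⟨prodAlgHom k', prodAlgHom_tprod k', bijective_prodAlgHom_of_isLocalization_away f g k'
    (fun i => RingHom.congr_fun (hk i)) Φ hΦ hbij⟩

instance PiTensorProduct.free {ι S : Type*} [Finite ι] [CommRing S] {M : ι → Type*}
    [∀ i, AddCommGroup (M i)] [∀ i, Module S (M i)] [∀ i, Module.Free S (M i)] :
    Module.Free S (⨂[S] i, M i) :=
  .of_basis (Basis.piTensorProduct fun i => Module.Free.chooseBasis S (M i))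

namespace WideMatrixShift

variable (K : Type) [CommRing K] (c : ℕ)
  (I : ∀ n : ℕ, Ideal (MvPolynomial (Fin c × Fin n) K))

instance [IsNoetherianRing K] (n : ℕ) : IsNoetherianRing (Qu K c I n) :=
  inferInstanceAs (IsNoetherianRing (MvPolynomial (Fin c × Fin n) K ⧸ I n))

variable {I} in
theorem isReduced_Qu {n : ℕ} (hI : (I n).IsRadical) : IsReduced (Qu K c I n) :=
  (Ideal.isRadical_iff_quotient_reduced (I n)).mp hI

/-- The structure homomorphism `K → A_n / I_n`. -/
noncomputable def scalars (n : ℕ) : K →+* Qu K c I n :=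
  (Ideal.Quotient.mk (I n)).comp C

theorem scalars_finiteType (n : ℕ) : (scalars K c I n).FiniteType :=
  (RingHom.FiniteType.of_surjective _ Ideal.Quotient.mk_surjective).comp
    (RingHom.finiteType_algebraMap.mpr
      (inferInstanceAs (Algebra.FiniteType K (MvPolynomial (Fin c × Fin n) K))))

variable (hmap : ChainMap K c I)

theorem ind_comp_scalars (m n : ℕ) (π : Fin m → Fin n) (hπ : Function.Injective π) :
    (ind K c I hmap m n π hπ).comp (scalars K c I m) = scalars K c I n :=
  RingHom.ext fun a => congrArg (Ideal.Quotient.mk (I n)) (rename_C _ a)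

theorem ind_bijective_of_surjective (m n : ℕ) (π : Fin m → Fin n) (hπ : Function.Injective π)
    (hsurj : Function.Surjective π)
    (hinj : Function.Injective (ind K c I hmap m n π hπ)) :
    Function.Bijective (ind K c I hmap m n π hπ) :=
  ⟨hinj, Ideal.quotientMap_surjective
    (rename_surjective _ (Function.surjective_id.prodMap hsurj))⟩

variable (n₀ : ℕ) (h : Qu K c I n₀)

theorem structMap_algebraMap (n : ℕ) (x : Qu K c I n₀) :
    structMap K c I hmap n₀ h n (algebraMap _ (Localization.Away h) x) =
      algebraMap _ (Bp K c I hmap n₀ h n)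
        (ind K c I hmap n₀ (n₀ + n) (Fin.castAdd n) (castAdd_inj n₀ n) x) :=
  IsLocalization.Away.lift_eq h
    (g := (algebraMap (Qu K c I (n₀ + n)) (Bp K c I hmap n₀ h n)).comp
      (ind K c I hmap n₀ (n₀ + n) (Fin.castAdd n) (castAdd_inj n₀ n)))
    (IsLocalization.map_units (Bp K c I hmap n₀ h n)
      ⟨hImg K c I hmap n₀ h n, Submonoid.mem_powers _⟩) x

theorem structMap_comp_algebraMap (n : ℕ) :
    (structMap K c I hmap n₀ h n).comp (algebraMap (Qu K c I n₀) (Localization.Away h)) =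
      (algebraMap (Qu K c I (n₀ + n)) (Bp K c I hmap n₀ h n)).comp
        (ind K c I hmap n₀ (n₀ + n) (Fin.castAdd n) (castAdd_inj n₀ n)) :=
  RingHom.ext (structMap_algebraMap K c I hmap n₀ h n)

theorem structMap_finiteType (n : ℕ) : (structMap K c I hmap n₀ h n).FiniteType := by
  refine RingHom.FiniteType.of_comp_finiteType
    (f := (algebraMap _ (Localization.Away h)).comp (scalars K c I n₀)) ?_
  rw [← RingHom.comp_assoc, structMap_comp_algebraMap, RingHom.comp_assoc, ind_comp_scalars]
  exact RingHom.FiniteType.comp (RingHom.finiteType_algebraMap.mpr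
    (IsLocalization.finiteType_of_monoid_fg (Submonoid.powers (hImg K c I hmap n₀ h n)) _))
    (scalars_finiteType K c I _)

theorem structMap_zero_bijective
    (hinj : Function.Injective (ind K c I hmap n₀ (n₀ + 0) (Fin.castAdd 0) (castAdd_inj n₀ 0))) :
    Function.Bijective (structMap K c I hmap n₀ h 0) := by
  have : IsLocalization.Away (ind K c I hmap n₀ (n₀ + 0) (Fin.castAdd 0) (castAdd_inj n₀ 0) h)
      (Bp K c I hmap n₀ h 0) :=
    inferInstanceAs (IsLocalization.Away (hImg K c I hmap n₀ h 0) (Bp K c I hmap n₀ h 0))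
  exact IsLocalization.Away.bijective_of_comp_algebraMap
    (g := ind K c I hmap n₀ (n₀ + 0) (Fin.castAdd 0) (castAdd_inj n₀ 0))
    (ind_bijective_of_surjective K c I hmap _ _ _ _ (fun i => ⟨i, rfl⟩) hinj) h
    (structMap_comp_algebraMap K c I hmap n₀ h 0)

variable (h' : Localization.Away h)

noncomputable instance : Algebra (Localization.Away h) (Bpp0 K c I n₀ h h') :=
  inferInstanceAs (Algebra _ (Localization.Away h'))

instance : IsLocalization.Away h' (Bpp0 K c I n₀ h h') :=
  inferInstanceAs (IsLocalization.Away h' (Localization.Away h'))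

theorem structMap₂_comp_algebraMap (n : ℕ) :
    (structMap₂ K c I hmap n₀ h h' n).comp (algebraMap _ (Bpp0 K c I n₀ h h')) =
      (algebraMap _ (Bpp K c I hmap n₀ h h' n)).comp (structMap K c I hmap n₀ h n) :=
  RingHom.ext fun x => IsLocalization.Away.lift_eq (S := Bpp0 K c I n₀ h h') h'
    (g := (algebraMap (Bp K c I hmap n₀ h n) (Bpp K c I hmap n₀ h h' n)).comp
      (structMap K c I hmap n₀ h n))
    (IsLocalization.Away.algebraMap_isUnit (structMap K c I hmap n₀ h n h')) x

theorem iotaLoc₂_comp_algebraMap (n : ℕ) (j : Fin n) :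
    (iotaLoc₂ K c I hmap n₀ h h' n j).comp (algebraMap _ (Bpp K c I hmap n₀ h h' 1)) =
      (algebraMap _ (Bpp K c I hmap n₀ h h' n)).comp (iotaLoc K c I hmap n₀ h n j) :=
  RingHom.ext fun x => IsLocalization.Away.lift_eq (S := Bpp K c I hmap n₀ h h' 1)
    (structMap K c I hmap n₀ h 1 h')
    (g := (algebraMap (Bp K c I hmap n₀ h n) (Bpp K c I hmap n₀ h h' n)).comp
      (iotaLoc K c I hmap n₀ h n j))
    (by
      rw [RingHom.comp_apply, ← RingHom.comp_apply (iotaLoc K c I hmap n₀ h n j),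
        iotaLoc_comp_structMap]
      exact IsLocalization.Away.algebraMap_isUnit (structMap K c I hmap n₀ h n h')) x

end WideMatrixShift

end

open WideMatrixShift in
set_option synthInstance.maxHeartbeats 1000000 in
set_option maxHeartbeats 1000000 in
/-- Strengthening of the Shift Theorem (Proposition 3.3): in the setting and with the
conclusion of the Shift Theorem, there is moreover a nonzero `h' ∈ B'_0` such that, with
`B''_n := B'_n[1/h']`: (1) for every `n ≥ 1` the natural `B''_0`-algebra homomorphism
from the `n`-fold tensor power of `B''_1` over `B''_0` to `B''_n` is an isomorphism;
(2) `B''_0` is an integral domain; and (3) every minimal prime of `B''_n` contracts to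
the zero ideal of `B''_0`. -/
theorem shift_theorem_strengthening
    (K : Type) [CommRing K] [IsNoetherianRing K] (c : ℕ)
    (I : ∀ n : ℕ, Ideal (MvPolynomial (Fin c × Fin n) K))
    (hsym : ∀ (n : ℕ) (π : Equiv.Perm (Fin n)),
      Ideal.map (MvPolynomial.rename (Prod.map (id : Fin c → Fin c) π)) (I n) = I n)
    (hincl : ∀ n : ℕ,
      Ideal.map (MvPolynomial.rename
          (Prod.map (id : Fin c → Fin c) (Fin.castSucc : Fin n → Fin (n + 1))))
        (I n) ≤ I (n + 1))
    (hmap : ChainMap K c I)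
    (hrad : ∀ n : ℕ, (I n).IsRadical)
    (hinj : ∀ (m n : ℕ) (π : Fin m → Fin n) (hπ : Function.Injective π),
      Function.Injective (ind K c I hmap m n π hπ))
    (hne : I 0 ≠ ⊤)
    (n₀ : ℕ) (h : Qu K c I n₀) (hh : h ≠ 0)
    (hiso : ∀ n : ℕ, 1 ≤ n →
      letI : Algebra (Localization.Away h) (Bp K c I hmap n₀ h 1) :=
        (structMap K c I hmap n₀ h 1).toAlgebra
      letI : Algebra (Localization.Away h) (Bp K c I hmap n₀ h n) :=
        (structMap K c I hmap n₀ h n).toAlgebra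
      ∃ Φ : (⨂[Localization.Away h] _ : Fin n, Bp K c I hmap n₀ h 1)
          →ₐ[Localization.Away h] Bp K c I hmap n₀ h n,
        (∀ x : Fin n → Bp K c I hmap n₀ h 1,
          Φ (PiTensorProduct.tprod (Localization.Away h) x)
            = ∏ j : Fin n, iotaLoc K c I hmap n₀ h n j (x j)) ∧
        Function.Bijective Φ) :
    ∃ h' : Localization.Away h, h' ≠ 0 ∧
      (∀ n : ℕ, 1 ≤ n →
        letI : Algebra (Bpp0 K c I n₀ h h') (Bpp K c I hmap n₀ h h' 1) :=
          (structMap₂ K c I hmap n₀ h h' 1).toAlgebra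
        letI : Algebra (Bpp0 K c I n₀ h h') (Bpp K c I hmap n₀ h h' n) :=
          (structMap₂ K c I hmap n₀ h h' n).toAlgebra
        ∃ Ψ : (⨂[Bpp0 K c I n₀ h h'] _ : Fin n, Bpp K c I hmap n₀ h h' 1)
            →ₐ[Bpp0 K c I n₀ h h'] Bpp K c I hmap n₀ h h' n,
          (∀ x : Fin n → Bpp K c I hmap n₀ h h' 1,
            Ψ (PiTensorProduct.tprod (Bpp0 K c I n₀ h h') x)
              = ∏ j : Fin n, iotaLoc₂ K c I hmap n₀ h h' n j (x j)) ∧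
          Function.Bijective Ψ) ∧
      IsDomain (Bpp0 K c I n₀ h h') ∧
      (∀ n : ℕ, ∀ P ∈ minimalPrimes (Bpp K c I hmap n₀ h h' n),
        Ideal.comap (structMap₂ K c I hmap n₀ h h' n) P = ⊥) := by
  have := isReduced_Qu K c (hrad n₀)
  have : Nontrivial (Localization.Away h) := by
    rw [← not_subsingleton_iff_nontrivial, IsLocalization.subsingleton_iff (M := .powers h)]
    rintro ⟨k, hk⟩
    exact hh (IsReduced.eq_zero h ⟨k, hk⟩)
  have : IsNoetherianRing (Localization.Away h) :=
    IsLocalization.isNoetherianRing (.powers h) _ inferInstance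
  obtain ⟨h', hh', H⟩ :=
    (structMap_finiteType K c I hmap n₀ h 1).exists_isDomain_and_free_away
  obtain ⟨hdom, hfree⟩ := H (Bpp0 K c I n₀ h h') (Bpp K c I hmap n₀ h h' 1) _
    (structMap₂_comp_algebraMap K c I hmap n₀ h h' 1)
  have htensor := fun (n : ℕ) (hn : 1 ≤ n) =>
    PiTensorProduct.exists_bijective_of_isLocalization_away h' _ _ _ _
      (structMap₂_comp_algebraMap K c I hmap n₀ h h' 1)
      (structMap₂_comp_algebraMap K c I hmap n₀ h h' n) _
      (iotaLoc_comp_structMap K c I hmap n₀ h n) _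
      (iotaLoc₂_comp_algebraMap K c I hmap n₀ h h' n) (hiso n hn)
  refine ⟨h', hh', htensor, hdom, fun n P hP => ?_⟩
  let : Algebra (Bpp0 K c I n₀ h h') (Bpp K c I hmap n₀ h h' n) :=
    (structMap₂ K c I hmap n₀ h h' n).toAlgebra
  suffices Module.Free (Bpp0 K c I n₀ h h') (Bpp K c I hmap n₀ h h' n) from
    Ideal.comap_algebraMap_eq_bot_of_mem_minimalPrimes hP
  obtain rfl | hn := n.eq_zero_or_pos
  · have hbij : Function.Bijective (structMap₂ K c I hmap n₀ h h' 0) :=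
      IsLocalization.Away.bijective_of_comp_algebraMap
        (structMap_zero_bijective K c I hmap n₀ h (hinj _ _ _ _)) h'
        (structMap₂_comp_algebraMap K c I hmap n₀ h h' 0)
    exact .of_equiv (LinearEquiv.ofBijective
      (Algebra.linearMap (Bpp0 K c I n₀ h h') (Bpp K c I hmap n₀ h h' 0)) hbij)
  · let : Algebra (Bpp0 K c I n₀ h h') (Bpp K c I hmap n₀ h h' 1) :=
      (structMap₂ K c I hmap n₀ h h' 1).toAlgebra
    obtain ⟨Ψ, -, hΨ⟩ := htensor n hn
    exact .of_equiv (LinearEquiv.ofBijective Ψ.toLinearMap hΨ)
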